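/- arXiv:1508.02205 — 3 statements merged into one kernel-verified Lean document; each statement's English description precedes it below -/
import Mathlib

section
/- Let q be a real number with 0 < q < 1, let c ≤ −2 and let w satisfy q < w ≤ 1 and τ(w) = −c. Then the sets Z_{q/w}⁺ = {(q/w)·q^(2n) : n ∈ ℕ} and Z_{w/q}⁻ = {(w/q)·q^(−2n) : n ∈ ℕ} are irreducible c-sets. -/
/-!
Write `zₙ = (q/w) q^(2n)`. Since `0 < q < w ≤ 1`, for `m ≥ 1` one has `q^(2m)/w < w ≤ 1`, so
strict monotonicity of `τ` on `(0, 1]` gives `c + τ(q^(2m)/w) > c + τ(w) = 0`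
(`tau_step_pos`), while `c + τ(1/w) = 0`. As `q zₙ = q^(2(n+1))/w` and `q⁻¹ zₙ = q^(2n)/w`, every
`zₙ` is adapted, the upward shift `zₙ ↦ zₙ₊₁` is always forced, and the downward shift
`zₙ ↦ zₙ₋₁` is forced exactly for `n ≥ 1`. So `Z_{q/w}⁺` is a `c`-set, and any `c`-set inside it
descends to its first point `q/w` (`base_mem`); two such sets cannot be disjoint.

The set `Z_{w/q}⁻` is the image of `Z_{q/w}⁺` under `z ↦ z⁻¹`, and `τ(y⁻¹) = τ(y)` makes inversion
a symmetry of the notion of (irreducible) `c`-set, exchanging the two shifts.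
-/

open Classical

/-- τ(y) = y + y⁻¹. -/
noncomputable def tau (y : ℝ) : ℝ := y + y⁻¹

/-- `Z` is a `c`-set (relative to the parameter `q`): a nonempty set of positive reals,
all of whose elements are `c`-adapted, and which is closed under the shifts
`z ↦ q^(-2ε) z` whenever `z` is strictly `c_ε`-adapted. -/
def IsCSet (q c : ℝ) (Z : Set ℝ) : Prop :=
  Z.Nonempty ∧ (∀ z ∈ Z, 0 < z) ∧
  (∀ z ∈ Z, 0 ≤ c + tau (q * z) ∧ 0 ≤ c + tau (q⁻¹ * z)) ∧
  (∀ z ∈ Z, 0 < c + tau (q * z) → q ^ (2 : ℤ) * z ∈ Z) ∧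
  (∀ z ∈ Z, 0 < c + tau (q⁻¹ * z) → q ^ (-2 : ℤ) * z ∈ Z)

/-- A `c`-set is irreducible if it cannot be written as the union of two disjoint `c`-sets. -/
def IsIrreducibleCSet (q c : ℝ) (Z : Set ℝ) : Prop :=
  IsCSet q c Z ∧
  ¬ ∃ Z₁ Z₂ : Set ℝ, IsCSet q c Z₁ ∧ IsCSet q c Z₂ ∧ Disjoint Z₁ Z₂ ∧ Z = Z₁ ∪ Z₂

/-- `Z_z = {z·q^(2n) : n ∈ ℤ}`. -/
def Zfull (q z : ℝ) : Set ℝ := {x | ∃ n : ℤ, x = z * q ^ (2 * n)}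

/-- `Z_z⁺ = {z·q^(2n) : n ∈ ℕ}`. -/
def Zplus (q z : ℝ) : Set ℝ := {x | ∃ n : ℕ, x = z * q ^ (2 * n)}

/-- `Z_z⁻ = {z·q^(−2n) : n ∈ ℕ}`. -/
def Zminus (q z : ℝ) : Set ℝ := {x | ∃ n : ℕ, x = z * q ^ (-(2 * n : ℤ))}

lemma tau_inv (y : ℝ) : tau y⁻¹ = tau y := by
  simp [tau, add_comm]

lemma tau_lt_tau {x y : ℝ} (hx : 0 < x) (hxy : x < y) (hy : y ≤ 1) : tau y < tau x := by
  have hy0 : 0 < y := hx.trans hxy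
  have h1 : 0 < 1 - x * y := by nlinarith
  have h : tau x - tau y = (y - x) * (1 - x * y) / (x * y) := by
    unfold tau
    field_simp
    ring
  have : 0 < tau x - tau y := by
    rw [h]
    have := sub_pos.2 hxy
    positivity
  linarith

/-- Inversion preserves `c`-sets; it exchanges the roles of `ε = 1` and `ε = -1`. -/
lemma IsCSet.inv {q c : ℝ} {Z : Set ℝ} (h : IsCSet q c Z) :
    IsCSet q c (Inv.inv ⁻¹' Z) := by
  obtain ⟨⟨x, hx⟩, hpos, had, hp, hm⟩ := h
  have e1 : ∀ z : ℝ, tau (q * z) = tau (q⁻¹ * z⁻¹) := fun z => by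
    rw [← tau_inv, mul_inv]
  have e2 : ∀ z : ℝ, tau (q⁻¹ * z) = tau (q * z⁻¹) := fun z => by
    rw [← tau_inv, mul_inv, inv_inv]
  refine ⟨⟨x⁻¹, by simpa using hx⟩, fun z hz => inv_pos.1 (hpos _ hz), fun z hz => ?_,
    fun z hz h => ?_, fun z hz h => ?_⟩
  · rw [e1 z, e2 z]
    exact (had _ hz).symm
  · rw [e1] at h
    have := hm _ hz h
    rwa [Set.mem_preimage, mul_inv, ← zpow_neg]
  · rw [e2] at h
    have := hp _ hz h
    rwa [Set.mem_preimage, mul_inv, ← zpow_neg, neg_neg]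

lemma IsIrreducibleCSet.inv {q c : ℝ} {Z : Set ℝ} (h : IsIrreducibleCSet q c Z) :
    IsIrreducibleCSet q c (Inv.inv ⁻¹' Z) := by
  refine ⟨h.1.inv, ?_⟩
  rintro ⟨Z₁, Z₂, h₁, h₂, hd, hZ⟩
  refine h.2 ⟨_, _, h₁.inv, h₂.inv, hd.preimage _, ?_⟩
  rw [← Set.preimage_union, ← hZ]
  ext x
  simp

lemma inv_preimage_Zplus (q w : ℝ) : Inv.inv ⁻¹' Zplus q (q / w) = Zminus q (w / q) := by
  ext x
  refine exists_congr fun n => ?_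
  rw [inv_eq_iff_eq_inv, mul_inv, inv_div, zpow_neg]
  norm_cast

section
variable {q c w : ℝ}

/-- Every point `q^(2m)/w` with `m ≥ 1` lies strictly below `w`, hence has larger `τ`. -/
lemma tau_step_pos (hq0 : 0 < q) (hq1 : q < 1) (hw0 : q < w) (hw1 : w ≤ 1)
    (hwc : tau w = -c) (n : ℕ) : 0 < c + tau (q ^ (2 * (n + 1)) / w) := by
  have hw : 0 < w := hq0.trans hw0
  have h1 : q ^ (2 * (n + 1)) ≤ q ^ 2 := pow_le_pow_of_le_one hq0.le hq1.le (by omega)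
  have h2 : q ^ (2 * (n + 1)) / w < w := by
    rw [div_lt_iff₀ hw]
    nlinarith
  have := tau_lt_tau (by positivity) h2 hw1
  linarith

lemma up_arg (q w : ℝ) (n : ℕ) : q * (q / w * q ^ (2 * n)) = q ^ (2 * (n + 1)) / w := by
  ring

lemma down_arg (hq0 : 0 < q) (w : ℝ) (n : ℕ) :
    q⁻¹ * (q / w * q ^ (2 * n)) = q ^ (2 * n) / w := by
  field_simp

lemma down_shift (hq0 : 0 < q) (w : ℝ) (n : ℕ) :
    q ^ (-2 : ℤ) * (q / w * q ^ (2 * (n + 1))) = q / w * q ^ (2 * n) := by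
  rw [zpow_neg, show q ^ (2 : ℤ) = q ^ 2 by norm_cast, mul_add, pow_add]
  field_simp

lemma isCSet_Zplus (hq0 : 0 < q) (hq1 : q < 1) (hw0 : q < w) (hw1 : w ≤ 1)
    (hwc : tau w = -c) : IsCSet q c (Zplus q (q / w)) := by
  have hw : 0 < w := hq0.trans hw0
  -- at the first point `q/w` the downward shift is obstructed
  have h0 : c + tau (q ^ (2 * 0) / w) = 0 := by
    rw [mul_zero, pow_zero, one_div, tau_inv, hwc, add_neg_cancel]
  have hpos := tau_step_pos hq0 hq1 hw0 hw1 hwc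
  refine ⟨⟨_, 0, rfl⟩, ?_, ?_, ?_, ?_⟩
  · rintro _ ⟨n, rfl⟩
    positivity
  · rintro _ ⟨n, rfl⟩
    rw [up_arg, down_arg hq0]
    refine ⟨(hpos n).le, ?_⟩
    cases n with
    | zero => exact h0.ge
    | succ n => exact (hpos n).le
  · rintro _ ⟨n, rfl⟩ -
    refine ⟨n + 1, ?_⟩
    rw [show q ^ (2 : ℤ) = q ^ 2 by norm_cast]
    ring
  · rintro _ ⟨n, rfl⟩ h
    rw [down_arg hq0] at h
    cases n with
    | zero => exact absurd h0 h.ne'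
    | succ n => exact ⟨n, down_shift hq0 w n⟩

/-- A `c`-set contained in `Z_{q/w}⁺` contains the first point `q/w`, by repeated downward
shifts. -/
lemma base_mem (hq0 : 0 < q) (hq1 : q < 1) (hw0 : q < w) (hw1 : w ≤ 1)
    (hwc : tau w = -c) {Z : Set ℝ} (hZ : IsCSet q c Z) (hsub : Z ⊆ Zplus q (q / w)) :
    q / w ∈ Z := by
  have key : ∀ n : ℕ, q / w * q ^ (2 * n) ∈ Z → q / w ∈ Z := by
    intro n
    induction n with
    | zero => simp
    | succ n ih =>
      intro h
      apply ih
      rw [← down_shift hq0]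
      apply hZ.2.2.2.2 _ h
      rw [down_arg hq0]
      exact tau_step_pos hq0 hq1 hw0 hw1 hwc n
  obtain ⟨x, hx⟩ := hZ.1
  obtain ⟨n, rfl⟩ := hsub hx
  exact key n hx

lemma isIrreducibleCSet_Zplus (hq0 : 0 < q) (hq1 : q < 1) (hw0 : q < w) (hw1 : w ≤ 1)
    (hwc : tau w = -c) : IsIrreducibleCSet q c (Zplus q (q / w)) := by
  refine ⟨isCSet_Zplus hq0 hq1 hw0 hw1 hwc, ?_⟩
  rintro ⟨Z₁, Z₂, h₁, h₂, hd, hZ⟩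
  exact Set.disjoint_left.1 hd
    (base_mem hq0 hq1 hw0 hw1 hwc h₁ (hZ ▸ Set.subset_union_left))
    (base_mem hq0 hq1 hw0 hw1 hwc h₂ (hZ ▸ Set.subset_union_right))

end

theorem small_discrete_series_irreducible (q c w : ℝ) (hq0 : 0 < q) (hq1 : q < 1)
    (hc : c ≤ -2) (hw0 : q < w) (hw1 : w ≤ 1) (hwc : tau w = -c) :
    IsIrreducibleCSet q c (Zplus q (q / w)) ∧
    IsIrreducibleCSet q c (Zminus q (w / q)) := by
  have h := isIrreducibleCSet_Zplus hq0 hq1 hw0 hw1 hwc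
  exact ⟨h, inv_preimage_Zplus q w ▸ h.inv⟩
end

section
/- Let q be a real number with 0 < q < 1, let x > 0 and let c be a real number with −2 < c < 2. Then Z = {x²·q^(2n) : n ∈ ℤ} is an irreducible c-set, W = {q^(2n) : n ∈ ℤ} is an irreducible (−c)-set, and z·w ∈ {x²·q^(2n) : n ∈ ℤ} for all z ∈ Z and w ∈ W. -/
/-! For `-2 < c < 2` and `y > 0` one has `τ(y) ≥ 2`, so `c + τ(y) > 0`: every positive real is strictly
`c_ε`-adapted for both signs. A `c`-set is then just a nonempty set of positive reals stable under
multiplication by `q ^ 2` and `q ^ (-2)`, that is, a nonempty union of orbits of `q ^ (2ℤ)` on the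
positive reals. The orbit `Zfull q z` is therefore a `c`-set, and it is irreducible because any
`c`-subset of a single orbit is the whole orbit, so two such subsets cannot be disjoint. As the
hypothesis on `c` is symmetric, the same holds for `-c`.
-/

open Classical

/-- Every positive real is strictly adapted when `-2 < c`, because `τ ≥ 2` by AM-GM. -/
lemma add_tau_pos {c y : ℝ} (hc : -2 < c) (hy : 0 < y) : 0 < c + tau y := by
  have h : tau y - 2 = (y - 1) ^ 2 * y⁻¹ := by
    unfold tau
    field_simp
    ring
  have h' : 0 ≤ (y - 1) ^ 2 * y⁻¹ := by positivity
  linarith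

lemma IsCSet.zpow_mul_mem {q c : ℝ} {Z : Set ℝ} (hq : 0 < q) (hc : -2 < c) (hZ : IsCSet q c Z)
    {z : ℝ} (hz : z ∈ Z) (n : ℤ) : z * q ^ (2 * n) ∈ Z := by
  obtain ⟨-, hpos, -, hup, hdown⟩ := hZ
  induction n with
  | zero => simpa using hz
  | succ n ih =>
    have h := hup _ ih (add_tau_pos hc (mul_pos hq (hpos _ ih)))
    rwa [mul_left_comm, ← zpow_add₀ hq.ne', show (2 : ℤ) + 2 * n = 2 * (n + 1) by ring] at h
  | pred n ih =>
    have h := hdown _ ih (add_tau_pos hc (mul_pos (inv_pos.2 hq) (hpos _ ih)))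
    rwa [mul_left_comm, ← zpow_add₀ hq.ne', show (-2 : ℤ) + 2 * -n = 2 * (-n - 1) by ring] at h

lemma isCSet_Zfull {q c z : ℝ} (hq : 0 < q) (hc : -2 < c) (hz : 0 < z) :
    IsCSet q c (Zfull q z) := by
  have hpos : ∀ y ∈ Zfull q z, 0 < y := by
    rintro _ ⟨n, rfl⟩
    positivity
  refine ⟨⟨z, 0, by simp⟩, hpos, fun y hy => ?_, ?_, ?_⟩
  · exact ⟨(add_tau_pos hc (mul_pos hq (hpos y hy))).le,
      (add_tau_pos hc (mul_pos (inv_pos.2 hq) (hpos y hy))).le⟩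
  · rintro _ ⟨n, rfl⟩ -
    exact ⟨n + 1, by rw [mul_left_comm, ← zpow_add₀ hq.ne']; ring_nf⟩
  · rintro _ ⟨n, rfl⟩ -
    exact ⟨n - 1, by rw [mul_left_comm, ← zpow_add₀ hq.ne']; ring_nf⟩

/-- A `c`-subset of a single orbit contains the base point of the orbit. -/
lemma IsCSet.base_mem {q c z : ℝ} {Z : Set ℝ} (hq : 0 < q) (hc : -2 < c) (hZ : IsCSet q c Z)
    (hsub : Z ⊆ Zfull q z) : z ∈ Z := by
  obtain ⟨y, hy⟩ := hZ.1
  obtain ⟨n, rfl⟩ := hsub hy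
  have h := hZ.zpow_mul_mem hq hc hy (-n)
  rwa [mul_assoc, ← zpow_add₀ hq.ne', show 2 * n + 2 * -n = 0 by ring, zpow_zero, mul_one] at h

lemma isIrreducibleCSet_Zfull {q c z : ℝ} (hq : 0 < q) (hc : -2 < c) (hz : 0 < z) :
    IsIrreducibleCSet q c (Zfull q z) := by
  refine ⟨isCSet_Zfull hq hc hz, ?_⟩
  rintro ⟨Z₁, Z₂, h₁, h₂, hd, hU⟩
  exact Set.disjoint_left.1 hd
    (h₁.base_mem hq hc (hU ▸ Set.subset_union_left))
    (h₂.base_mem hq hc (hU ▸ Set.subset_union_right))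

theorem principal_case_compatible_pair (q x c : ℝ) (hq0 : 0 < q) (hq1 : q < 1) (hx : 0 < x)
    (hc1 : -2 < c) (hc2 : c < 2) :
    IsIrreducibleCSet q c (Zfull q (x ^ 2)) ∧
    IsIrreducibleCSet q (-c) (Zfull q 1) ∧
    ∀ z ∈ Zfull q (x ^ 2), ∀ w ∈ Zfull q 1, ∃ n : ℤ, z * w = x ^ 2 * q ^ (2 * n) := by
  refine ⟨isIrreducibleCSet_Zfull hq0 hc1 (by positivity),
    isIrreducibleCSet_Zfull hq0 (by linarith) one_pos, ?_⟩
  rintro _ ⟨m, rfl⟩ _ ⟨n, rfl⟩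
  exact ⟨m + n, by rw [one_mul, mul_assoc, ← zpow_add₀ hq0.ne', mul_add]⟩
end

section
/- Let q be a real number with 0 < q < 1, let c ∈ ℝ, and let Z be a c-set. Let V be the complex vector space of finitely supported functions on Z, with standard basis (δ_z)_{z∈Z}, equipped with the ℓ² inner product. Then: (i) for every z ∈ Z with q²·z ∉ Z one has c + τ(q·z) = 0, and for every z ∈ Z with q⁻²·z ∉ Z one has c + τ(q⁻¹·z) = 0; consequently the linear maps A₊, A₋ : V → V given by (q − q⁻¹)·A₊δ_z = (c + τ(q·z))^(1/2)·δ_{q²z} when q²·z ∈ Z and A₊δ_z = 0 otherwise, and (q − q⁻¹)·A₋δ_z = (c + τ(q⁻¹·z))^(1/2)·δ_{q⁻²z} when q⁻²·z ∈ Z and A₋δ_z = 0 otherwise, are well defined; (ii) ⟨A₊f, g⟩ = ⟨f, A₋g⟩ for all f, g ∈ V; and (iii) A₋A₊ − A₊A₋ = M, where M is the diagonal operator with M·δ_z = ((z − z⁻¹)/(q − q⁻¹))·δ_z. -/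
/-!
Since `c + τ(q^{±1} z) ≥ 0` on a `c`-set, either this quantity vanishes or the step
`z ↦ q^{±2} z` stays inside `Z`; this is the first claim. The steps by `q²` and `q⁻²` are mutually
inverse, and for `w = q² z` one has `q⁻¹ w = q z`, so the matrix entry of `A₊` from `z` to `w` equals
the (real) matrix entry of `A₋` from `w` to `z`. This gives the adjointness, by comparison on basis
vectors. It also shows that `A₋ A₊` and `A₊ A₋` are diagonal with entries
`(c + τ(q z)) / (q − q⁻¹)²` and `(c + τ(q⁻¹ z)) / (q − q⁻¹)²`; at a `z` where the step leaves `Z` the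
composite is zero, and the formula remains correct because of the first claim. The commutation
relation is then the identity `τ(q z) − τ(q⁻¹ z) = (q − q⁻¹)(z − z⁻¹)`.
-/

open Classical

/-- The ℓ² inner product on the space `↥Z →₀ ℂ` of finitely supported functions on `Z`. -/
noncomputable def ipV (Z : Set ℝ) (f g : ↥Z →₀ ℂ) : ℂ :=
  f.sum fun z a => (starRingEnd ℂ) a * g z

/-- The raising operator `A₊`, determined on the basis by
`(q − q⁻¹)·A₊ δ_z = (c + τ(q z))^(1/2)·δ_{q² z}` if `q² z ∈ Z`, and `A₊ δ_z = 0` otherwise. -/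
noncomputable def Aplus (q c : ℝ) (Z : Set ℝ) : (↥Z →₀ ℂ) →ₗ[ℂ] (↥Z →₀ ℂ) :=
  Finsupp.lsum ℂ fun z => LinearMap.toSpanSingleton ℂ _
    (if h : q ^ (2 : ℤ) * (z : ℝ) ∈ Z then
      ((Real.sqrt (c + tau (q * z)) / (q - q⁻¹) : ℝ) : ℂ) •
        Finsupp.single (⟨q ^ (2 : ℤ) * (z : ℝ), h⟩ : ↥Z) (1 : ℂ)
    else 0)

/-- The lowering operator `A₋`, determined on the basis by
`(q − q⁻¹)·A₋ δ_z = (c + τ(q⁻¹ z))^(1/2)·δ_{q⁻² z}` if `q⁻² z ∈ Z`, and `A₋ δ_z = 0` otherwise. -/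
noncomputable def Aminus (q c : ℝ) (Z : Set ℝ) : (↥Z →₀ ℂ) →ₗ[ℂ] (↥Z →₀ ℂ) :=
  Finsupp.lsum ℂ fun z => LinearMap.toSpanSingleton ℂ _
    (if h : q ^ (-2 : ℤ) * (z : ℝ) ∈ Z then
      ((Real.sqrt (c + tau (q⁻¹ * z)) / (q - q⁻¹) : ℝ) : ℂ) •
        Finsupp.single (⟨q ^ (-2 : ℤ) * (z : ℝ), h⟩ : ↥Z) (1 : ℂ)
    else 0)

/-- The diagonal operator `M` with `M δ_z = ((z − z⁻¹)/(q − q⁻¹))·δ_z`. -/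
noncomputable def Mdiag (q : ℝ) (Z : Set ℝ) : (↥Z →₀ ℂ) →ₗ[ℂ] (↥Z →₀ ℂ) :=
  Finsupp.lsum ℂ fun z => LinearMap.toSpanSingleton ℂ _
    (((((z : ℝ) - (z : ℝ)⁻¹) / (q - q⁻¹) : ℝ) : ℂ) • Finsupp.single z (1 : ℂ))

lemma ipV_single_left (Z : Set ℝ) (z : ↥Z) (a : ℂ) (g : ↥Z →₀ ℂ) :
    ipV Z (Finsupp.single z a) g = (starRingEnd ℂ) a * g z := by
  simp [ipV]

lemma ipV_add_left (Z : Set ℝ) (f₁ f₂ g : ↥Z →₀ ℂ) :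
    ipV Z (f₁ + f₂) g = ipV Z f₁ g + ipV Z f₂ g := by
  unfold ipV
  exact Finsupp.sum_add_index' (by simp) (by intros; simp [add_mul])

lemma ipV_add_right (Z : Set ℝ) (f g₁ g₂ : ↥Z →₀ ℂ) :
    ipV Z f (g₁ + g₂) = ipV Z f g₁ + ipV Z f g₂ := by
  simp [ipV, mul_add, Finsupp.sum_add]

lemma ipV_zero_left (Z : Set ℝ) (g : ↥Z →₀ ℂ) : ipV Z 0 g = 0 := by simp [ipV]

lemma ipV_zero_right (Z : Set ℝ) (f : ↥Z →₀ ℂ) : ipV Z f 0 = 0 := by simp [ipV]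

lemma ipV_single_right (Z : Set ℝ) (w : ↥Z) (b : ℂ) (f : ↥Z →₀ ℂ) :
    ipV Z f (Finsupp.single w b) = (starRingEnd ℂ) (f w) * b := by
  induction f using Finsupp.induction_linear with
  | zero => simp [ipV_zero_left]
  | add f₁ f₂ h₁ h₂ => simp [ipV_add_left, h₁, h₂, add_mul]
  | single z a =>
    rw [ipV_single_left, Finsupp.single_apply, Finsupp.single_apply]
    by_cases h : z = w
    · simp [h]
    · simp [h, Ne.symm h]

lemma Aplus_single_of_mem (q c : ℝ) (Z : Set ℝ) (z : ↥Z) (a : ℂ)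
    (h : q ^ (2 : ℤ) * (z : ℝ) ∈ Z) :
    Aplus q c Z (Finsupp.single z a) = Finsupp.single (⟨q ^ (2 : ℤ) * (z : ℝ), h⟩ : ↥Z)
      (a * ((Real.sqrt (c + tau (q * z)) / (q - q⁻¹) : ℝ) : ℂ)) := by
  rw [Aplus, Finsupp.lsum_single, LinearMap.toSpanSingleton_apply, dif_pos h,
    Finsupp.smul_single, Finsupp.smul_single, smul_eq_mul, smul_eq_mul, mul_one]

lemma Aplus_single_of_notMem (q c : ℝ) (Z : Set ℝ) (z : ↥Z) (a : ℂ)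
    (h : q ^ (2 : ℤ) * (z : ℝ) ∉ Z) : Aplus q c Z (Finsupp.single z a) = 0 := by
  rw [Aplus, Finsupp.lsum_single, LinearMap.toSpanSingleton_apply, dif_neg h, smul_zero]

lemma Aminus_single_of_mem (q c : ℝ) (Z : Set ℝ) (z : ↥Z) (a : ℂ)
    (h : q ^ (-2 : ℤ) * (z : ℝ) ∈ Z) :
    Aminus q c Z (Finsupp.single z a) = Finsupp.single (⟨q ^ (-2 : ℤ) * (z : ℝ), h⟩ : ↥Z)
      (a * ((Real.sqrt (c + tau (q⁻¹ * z)) / (q - q⁻¹) : ℝ) : ℂ)) := by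
  rw [Aminus, Finsupp.lsum_single, LinearMap.toSpanSingleton_apply, dif_pos h,
    Finsupp.smul_single, Finsupp.smul_single, smul_eq_mul, smul_eq_mul, mul_one]

lemma Aminus_single_of_notMem (q c : ℝ) (Z : Set ℝ) (z : ↥Z) (a : ℂ)
    (h : q ^ (-2 : ℤ) * (z : ℝ) ∉ Z) : Aminus q c Z (Finsupp.single z a) = 0 := by
  rw [Aminus, Finsupp.lsum_single, LinearMap.toSpanSingleton_apply, dif_neg h, smul_zero]

lemma Mdiag_single (q : ℝ) (Z : Set ℝ) (z : ↥Z) (a : ℂ) :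
    Mdiag q Z (Finsupp.single z a) =
      Finsupp.single z (a * ((((z : ℝ) - (z : ℝ)⁻¹) / (q - q⁻¹) : ℝ) : ℂ)) := by
  rw [Mdiag, Finsupp.lsum_single, LinearMap.toSpanSingleton_apply,
    Finsupp.smul_single, Finsupp.smul_single, smul_eq_mul, smul_eq_mul, mul_one]

lemma zpow_neg_two_mul_zpow_two_mul {q : ℝ} (hq : q ≠ 0) (x : ℝ) :
    q ^ (-2 : ℤ) * (q ^ (2 : ℤ) * x) = x := by
  rw [← mul_assoc, ← zpow_add₀ hq]; simp

lemma zpow_two_mul_zpow_neg_two_mul {q : ℝ} (hq : q ≠ 0) (x : ℝ) :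
    q ^ (2 : ℤ) * (q ^ (-2 : ℤ) * x) = x := by
  rw [← mul_assoc, ← zpow_add₀ hq]; simp

lemma inv_mul_zpow_two_mul {q : ℝ} (hq : q ≠ 0) (x : ℝ) :
    q⁻¹ * (q ^ (2 : ℤ) * x) = q * x := by
  rw [zpow_ofNat]; field_simp

lemma mul_zpow_neg_two_mul {q : ℝ} (hq : q ≠ 0) (x : ℝ) :
    q * (q ^ (-2 : ℤ) * x) = q⁻¹ * x := by
  rw [zpow_neg, zpow_ofNat]; field_simp

/-- The matrix entries of `A₊`, with the membership condition absorbed into `w : ↥Z`. -/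
lemma Aplus_single_apply (q c : ℝ) (Z : Set ℝ) (z w : ↥Z) (a : ℂ) :
    Aplus q c Z (Finsupp.single z a) w = if (w : ℝ) = q ^ (2 : ℤ) * (z : ℝ) then
      a * ((Real.sqrt (c + tau (q * z)) / (q - q⁻¹) : ℝ) : ℂ) else 0 := by
  by_cases h : q ^ (2 : ℤ) * (z : ℝ) ∈ Z
  · rw [Aplus_single_of_mem q c Z z a h, Finsupp.single_apply]
    simp only [Subtype.ext_iff, eq_comm]
  · rw [Aplus_single_of_notMem q c Z z a h, if_neg, Finsupp.zero_apply]
    exact fun e => h (e ▸ w.2)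

/-- The matrix entries of `A₋`, with the membership condition absorbed into `w : ↥Z`. -/
lemma Aminus_single_apply (q c : ℝ) (Z : Set ℝ) (z w : ↥Z) (a : ℂ) :
    Aminus q c Z (Finsupp.single z a) w = if (w : ℝ) = q ^ (-2 : ℤ) * (z : ℝ) then
      a * ((Real.sqrt (c + tau (q⁻¹ * z)) / (q - q⁻¹) : ℝ) : ℂ) else 0 := by
  by_cases h : q ^ (-2 : ℤ) * (z : ℝ) ∈ Z
  · rw [Aminus_single_of_mem q c Z z a h, Finsupp.single_apply]
    simp only [Subtype.ext_iff, eq_comm]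
  · rw [Aminus_single_of_notMem q c Z z a h, if_neg, Finsupp.zero_apply]
    exact fun e => h (e ▸ w.2)

lemma ipV_Aplus_left {q : ℝ} (hq : q ≠ 0) (c : ℝ) (Z : Set ℝ) (f g : ↥Z →₀ ℂ) :
    ipV Z (Aplus q c Z f) g = ipV Z f (Aminus q c Z g) := by
  induction f using Finsupp.induction_linear with
  | zero => simp [ipV_zero_left]
  | add f₁ f₂ h₁ h₂ => rw [map_add, ipV_add_left, ipV_add_left, h₁, h₂]
  | single z a =>
    induction g using Finsupp.induction_linear with
    | zero => simp [ipV_zero_right]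
    | add g₁ g₂ h₁ h₂ => rw [map_add, ipV_add_right, ipV_add_right, h₁, h₂]
    | single w b =>
      rw [ipV_single_right, ipV_single_left, Aplus_single_apply, Aminus_single_apply]
      by_cases h : (w : ℝ) = q ^ (2 : ℤ) * (z : ℝ)
      · have h' : (z : ℝ) = q ^ (-2 : ℤ) * (w : ℝ) := by
          rw [h, zpow_neg_two_mul_zpow_two_mul hq]
        have e : q⁻¹ * (w : ℝ) = q * z := by rw [h, inv_mul_zpow_two_mul hq]
        rw [if_pos h, if_pos h', e, map_mul, Complex.conj_ofReal]
        ring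
      · have h' : ¬ (z : ℝ) = q ^ (-2 : ℤ) * (w : ℝ) := fun h' =>
          h (by rw [h', zpow_two_mul_zpow_neg_two_mul hq])
        rw [if_neg h, if_neg h', map_zero, zero_mul, mul_zero]

lemma IsCSet.eq_zero_of_up_notMem {q c : ℝ} {Z : Set ℝ} (hZ : IsCSet q c Z) {z : ℝ} (hz : z ∈ Z)
    (h : q ^ (2 : ℤ) * z ∉ Z) : c + tau (q * z) = 0 := by
  obtain ⟨-, -, hnn, hup, -⟩ := hZ
  exact le_antisymm (not_lt.mp fun hlt => h (hup z hz hlt)) (hnn z hz).1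

lemma IsCSet.eq_zero_of_down_notMem {q c : ℝ} {Z : Set ℝ} (hZ : IsCSet q c Z) {z : ℝ} (hz : z ∈ Z)
    (h : q ^ (-2 : ℤ) * z ∉ Z) : c + tau (q⁻¹ * z) = 0 := by
  obtain ⟨-, -, hnn, -, hdown⟩ := hZ
  exact le_antisymm (not_lt.mp fun hlt => h (hdown z hz hlt)) (hnn z hz).2

lemma ofReal_sqrt_div_mul_self {x : ℝ} (hx : 0 ≤ x) (d : ℝ) (a : ℂ) :
    a * ((Real.sqrt x / d : ℝ) : ℂ) * ((Real.sqrt x / d : ℝ) : ℂ) = a * ((x / d ^ 2 : ℝ) : ℂ) := by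
  rw [mul_assoc, ← Complex.ofReal_mul, div_mul_div_comm, Real.mul_self_sqrt hx, sq]

lemma Aminus_Aplus_single {q c : ℝ} (hq : q ≠ 0) {Z : Set ℝ} (hZ : IsCSet q c Z) (z : ↥Z) (a : ℂ) :
    Aminus q c Z (Aplus q c Z (Finsupp.single z a)) =
      Finsupp.single z (a * (((c + tau (q * z)) / (q - q⁻¹) ^ 2 : ℝ) : ℂ)) := by
  by_cases h : q ^ (2 : ℤ) * (z : ℝ) ∈ Z
  · have e := zpow_neg_two_mul_zpow_two_mul hq (z : ℝ)
    rw [Aplus_single_of_mem q c Z z a h, Aminus_single_of_mem q c Z _ _ (by simp only [e, z.2])]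
    simp only [e, inv_mul_zpow_two_mul hq]
    rw [ofReal_sqrt_div_mul_self (hZ.2.2.1 z z.2).1]
  · rw [Aplus_single_of_notMem q c Z z a h, hZ.eq_zero_of_up_notMem z.2 h]
    simp

lemma Aplus_Aminus_single {q c : ℝ} (hq : q ≠ 0) {Z : Set ℝ} (hZ : IsCSet q c Z) (z : ↥Z) (a : ℂ) :
    Aplus q c Z (Aminus q c Z (Finsupp.single z a)) =
      Finsupp.single z (a * (((c + tau (q⁻¹ * z)) / (q - q⁻¹) ^ 2 : ℝ) : ℂ)) := by
  by_cases h : q ^ (-2 : ℤ) * (z : ℝ) ∈ Z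
  · have e := zpow_two_mul_zpow_neg_two_mul hq (z : ℝ)
    rw [Aminus_single_of_mem q c Z z a h, Aplus_single_of_mem q c Z _ _ (by simp only [e, z.2])]
    simp only [e, mul_zpow_neg_two_mul hq]
    rw [ofReal_sqrt_div_mul_self (hZ.2.2.1 z z.2).2]
  · rw [Aminus_single_of_notMem q c Z z a h, hZ.eq_zero_of_down_notMem z.2 h]
    simp

lemma tau_sub_div {q : ℝ} (hd : q - q⁻¹ ≠ 0) (c z : ℝ) :
    (c + tau (q * z)) / (q - q⁻¹) ^ 2 - (c + tau (q⁻¹ * z)) / (q - q⁻¹) ^ 2 =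
      (z - z⁻¹) / (q - q⁻¹) := by
  have key : (c + tau (q * z)) - (c + tau (q⁻¹ * z)) = (q - q⁻¹) * (z - z⁻¹) := by
    simp only [tau, mul_inv, inv_inv]; ring
  rw [← sub_div, key, sq, mul_div_mul_left _ _ hd]

theorem cSet_ladder_operators (q c : ℝ) (hq0 : 0 < q) (hq1 : q < 1)
    (Z : Set ℝ) (hZ : IsCSet q c Z) :
    ((∀ z ∈ Z, q ^ (2 : ℤ) * z ∉ Z → c + tau (q * z) = 0) ∧
      (∀ z ∈ Z, q ^ (-2 : ℤ) * z ∉ Z → c + tau (q⁻¹ * z) = 0)) ∧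
    (∀ f g : ↥Z →₀ ℂ, ipV Z (Aplus q c Z f) g = ipV Z f (Aminus q c Z g)) ∧
    (∀ f : ↥Z →₀ ℂ,
      Aminus q c Z (Aplus q c Z f) - Aplus q c Z (Aminus q c Z f) = Mdiag q Z f) := by
  have hq : q ≠ 0 := hq0.ne'
  have hd : q - q⁻¹ ≠ 0 := (sub_neg.mpr (hq1.trans ((one_lt_inv₀ hq0).mpr hq1))).ne
  refine ⟨⟨fun z hz h => hZ.eq_zero_of_up_notMem hz h,
    fun z hz h => hZ.eq_zero_of_down_notMem hz h⟩, fun f g => ipV_Aplus_left hq c Z f g, fun f => ?_⟩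
  induction f using Finsupp.induction_linear with
  | zero => simp
  | add f₁ f₂ h₁ h₂ => rw [map_add (Mdiag q Z), ← h₁, ← h₂]; simp only [map_add]; abel
  | single z a =>
    rw [Aminus_Aplus_single hq hZ, Aplus_Aminus_single hq hZ, Mdiag_single, ← Finsupp.single_sub,
      ← mul_sub, ← Complex.ofReal_sub, tau_sub_div hd]
end
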